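/- Let φ : ℝ² → ℝ² be a C² diffeomorphism whose inverse is C¹ and whose Jacobian determinant satisfies det Dφ(ξ) = 1 for all ξ. Let F(ξ) = Dφ(ξ) (a 2×2 matrix), and let C : ℝ² → Matrix (Fin 2) (Fin 2) ℝ be C¹. Define S : ℝ² → Matrix (Fin 2) (Fin 2) ℝ by S(x) = F(φ⁻¹(x)) · C(φ⁻¹(x)) · F(φ⁻¹(x))ᵀ. Then for every ξ ∈ ℝ² and every i ∈ {1,2}: Σ_{j=1}^{2} (∂S_{ij}/∂x_j)(φ(ξ)) = Σ_{k,l=1}^{2} ∂/∂ξ_l ( C_{kl}(ξ) F_{ik}(ξ) ). -/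

import Mathlib

open Matrix

/-- The Jacobian matrix of a map `φ : ℝ² → ℝ²`, with partial derivatives taken
coordinatewise. -/
noncomputable def jacobian2 (φ : ℝ × ℝ → ℝ × ℝ) (ξ : ℝ × ℝ) : Matrix (Fin 2) (Fin 2) ℝ :=
  !![deriv (fun s => (φ (s, ξ.2)).1) ξ.1, deriv (fun s => (φ (ξ.1, s)).1) ξ.2;
     deriv (fun s => (φ (s, ξ.2)).2) ξ.1, deriv (fun s => (φ (ξ.1, s)).2) ξ.2]

/-!
Row `i` of `S` is the push-forward `(Dφ · T) ∘ ψ` of the vector field `T` with components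
`T_l = Σ_k C_{kl} F_{ik}`, so the identity says that the divergence of a vector field is unchanged
under push-forward by a map of constant Jacobian determinant. With `B = Dψ(φ ξ) = Dφ(ξ)⁻¹` and the
symmetry of `D²φ`, the derivative of the push-forward at `φ ξ` is `(Dφ ∘ DT + D²φ(T, ·)) ∘ B`. Its
trace is `tr DT + tr (B ∘ D²φ(T, ·))`, and the last term is the derivative of `det (B ∘ Dφ)` in the
direction `T`, since `B ∘ Dφ` is the identity at `ξ` and `tr` is the derivative of `det` there. That
determinant is locally constant, so the term vanishes.
-/

open Filter Module Topology

section Determinant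

variable {𝕜 E : Type*} [NontriviallyNormedField 𝕜] [CompleteSpace 𝕜]
  [NormedAddCommGroup E] [NormedSpace 𝕜 E] [FiniteDimensional 𝕜 E]

theorem differentiable_continuousLinearMap_det :
    Differentiable 𝕜 (fun A : E →L[𝕜] E => A.det) := by
  let b := finBasis 𝕜 E
  have differentiable_entry (i j) :
      Differentiable 𝕜 (fun A : E →L[𝕜] E => LinearMap.toMatrix b b A i j) := by
    simp only [LinearMap.toMatrix_apply]
    exact fun A => ((b.coord i).toContinuousLinearMap.differentiableAt).comp A
      (ContinuousLinearMap.apply 𝕜 E (b j)).differentiableAt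
  simp only [ContinuousLinearMap.det, ← LinearMap.det_toMatrix b, Matrix.det_apply]
  fun_prop

theorem fderiv_continuousLinearMap_det_one (H : E →L[𝕜] E) :
    fderiv 𝕜 (fun A : E →L[𝕜] E => A.det) 1 H = LinearMap.trace 𝕜 E H := by
  let b := finBasis 𝕜 E
  let p := (1 + (Polynomial.X : Polynomial 𝕜) •
    (LinearMap.toMatrix b b H).map Polynomial.C).det
  have det_line (t : 𝕜) : (1 + t • H).det = p.eval t := by
    simp [p, ContinuousLinearMap.det, ← LinearMap.det_toMatrix b, eval_det,
      LinearMap.toMatrix_one, ← smul_eq_mul_diagonal]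
  calc fderiv 𝕜 (fun A : E →L[𝕜] E => A.det) 1 H
      = lineDeriv 𝕜 (fun A : E →L[𝕜] E => A.det) 1 H :=
        (differentiable_continuousLinearMap_det 1).lineDeriv_eq_fderiv.symm
    _ = p.derivative.eval 0 := by simp only [lineDeriv, det_line, Polynomial.deriv]
    _ = LinearMap.trace 𝕜 E H := by
        rw [Matrix.derivative_det_one_add_X_smul, LinearMap.trace_eq_matrix_trace 𝕜 b]

theorem trace_comp_fderiv_eq_zero_of_det_eventually_const {G : Type*} [NormedAddCommGroup G]
    [NormedSpace 𝕜 G] {A : G → E →L[𝕜] E} {B : E →L[𝕜] E} {ξ : G}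
    (hA : DifferentiableAt 𝕜 A ξ) (hB : B ∘L A ξ = 1)
    (hdet : ∀ᶠ y in 𝓝 ξ, (A y).det = (A ξ).det) (w : G) :
    LinearMap.trace 𝕜 E (B ∘L fderiv 𝕜 A ξ w : E →L[𝕜] E) = 0 := by
  let L := ContinuousLinearMap.compL 𝕜 E E E B
  have det_const : (fun y => (L (A y)).det) =ᶠ[𝓝 ξ] fun _ => (L (A ξ)).det := by
    filter_upwards [hdet] with y hy
    calc (L (A y)).det = B.det * (A y).det := LinearMap.det_comp _ _
      _ = B.det * (A ξ).det := by rw [hy]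
      _ = (L (A ξ)).det := (LinearMap.det_comp _ _).symm
  have hasFDerivAt_det : HasFDerivAt (fun y => (L (A y)).det)
      (fderiv 𝕜 (fun M : E →L[𝕜] E => M.det) (L (A ξ)) ∘L (L ∘L fderiv 𝕜 A ξ)) ξ :=
    HasFDerivAt.comp (g := fun M : E →L[𝕜] E => M.det) ξ
      (differentiable_continuousLinearMap_det _).hasFDerivAt
      (L.hasFDerivAt.comp ξ hA.hasFDerivAt)
  have fderiv_det_eq_zero :=
    hasFDerivAt_det.unique ((hasFDerivAt_const _ ξ).congr_of_eventuallyEq det_const)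
  rw [← fderiv_continuousLinearMap_det_one, ← hB]
  exact congrArg (· w) fderiv_det_eq_zero

end Determinant

section Derivative

variable {𝕜 E F : Type*} [NontriviallyNormedField 𝕜] [NormedAddCommGroup E] [NormedSpace 𝕜 E]
  [NormedAddCommGroup F] [NormedSpace 𝕜 F] {φ : E → F} {ψ : F → E} {ξ : E}

theorem differentiableAt_fderiv_of_contDiffAt_two (hφ : ContDiffAt 𝕜 2 φ ξ) :
    DifferentiableAt 𝕜 (fderiv 𝕜 φ) ξ :=
  (hφ.fderiv_right (m := 1) le_rfl).differentiableAt one_ne_zero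

theorem fderiv_comp_fderiv_eq_one_of_eventually_leftInverse (hφ : DifferentiableAt 𝕜 φ ξ)
    (hψ : DifferentiableAt 𝕜 ψ (φ ξ)) (hli : ∀ᶠ y in 𝓝 ξ, ψ (φ y) = y) :
    fderiv 𝕜 ψ (φ ξ) ∘L fderiv 𝕜 φ ξ = 1 :=
  (hψ.hasFDerivAt.comp ξ hφ.hasFDerivAt).unique ((hasFDerivAt_id ξ).congr_of_eventuallyEq hli)

end Derivative

section Divergence

variable {𝕜 E : Type*} [NontriviallyNormedField 𝕜] [NormedAddCommGroup E] [NormedSpace 𝕜 E]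

variable (𝕜) in
/-- The divergence of a vector field `V` at `x`, defined without coordinates as the trace of the
derivative of `V` at `x`. It is `0` where `V` is not differentiable. -/
noncomputable def divergence (V : E → E) (x : E) : 𝕜 :=
  LinearMap.trace 𝕜 E (fderiv 𝕜 V x)

variable (𝕜) in
/-- The push-forward `(Dφ · T) ∘ ψ` of a vector field `T` along `φ`, where `ψ` stands for the
inverse of `φ`. -/
noncomputable def pushforward (φ ψ T : E → E) (x : E) : E :=
  fderiv 𝕜 φ (ψ x) (T (ψ x))

variable {φ ψ T : E → E} {ξ : E}

theorem differentiableAt_pushforward (hφ : DifferentiableAt 𝕜 (fderiv 𝕜 φ) ξ)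
    (hψ : DifferentiableAt 𝕜 ψ (φ ξ)) (hψξ : ψ (φ ξ) = ξ) (hT : DifferentiableAt 𝕜 T ξ) :
    DifferentiableAt 𝕜 (pushforward 𝕜 φ ψ T) (φ ξ) :=
  DifferentiableAt.clm_apply (DifferentiableAt.comp (φ ξ) (hψξ.symm ▸ hφ) hψ)
    (DifferentiableAt.comp (φ ξ) (hψξ.symm ▸ hT) hψ)

theorem hasFDerivAt_pushforward (hφ : DifferentiableAt 𝕜 (fderiv 𝕜 φ) ξ)
    (hsymm : IsSymmSndFDerivAt 𝕜 φ ξ) (hψ : DifferentiableAt 𝕜 ψ (φ ξ)) (hψξ : ψ (φ ξ) = ξ)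
    (hT : DifferentiableAt 𝕜 T ξ) :
    HasFDerivAt (pushforward 𝕜 φ ψ T)
      ((fderiv 𝕜 φ ξ ∘L fderiv 𝕜 T ξ + fderiv 𝕜 (fderiv 𝕜 φ) ξ (T ξ)) ∘L fderiv 𝕜 ψ (φ ξ))
      (φ ξ) := by
  have hφT : HasFDerivAt (fun y => fderiv 𝕜 φ y (T y))
      (fderiv 𝕜 φ ξ ∘L fderiv 𝕜 T ξ + fderiv 𝕜 (fderiv 𝕜 φ) ξ (T ξ)) (ψ (φ ξ)) := by
    rw [hψξ]
    convert hφ.hasFDerivAt.clm_apply hT.hasFDerivAt using 2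
    ext w
    exact hsymm (T ξ) w
  exact hφT.comp (φ ξ) hψ.hasFDerivAt

theorem divergence_pushforward [CompleteSpace 𝕜] [FiniteDimensional 𝕜 E]
    (hφ : ContDiffAt 𝕜 (minSmoothness 𝕜 2) φ ξ) (hψ : DifferentiableAt 𝕜 ψ (φ ξ))
    (hli : ∀ᶠ y in 𝓝 ξ, ψ (φ y) = y)
    (hdet : ∀ᶠ y in 𝓝 ξ, (fderiv 𝕜 φ y).det = (fderiv 𝕜 φ ξ).det)
    (hT : DifferentiableAt 𝕜 T ξ) :
    divergence 𝕜 (pushforward 𝕜 φ ψ T) (φ ξ) = divergence 𝕜 T ξ := by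
  have hφ₂ : ContDiffAt 𝕜 2 φ ξ := hφ.of_le le_minSmoothness
  have hDφ := differentiableAt_fderiv_of_contDiffAt_two hφ₂
  have hsymm : IsSymmSndFDerivAt 𝕜 φ ξ := hφ.isSymmSndFDerivAt le_rfl
  rw [divergence, (hasFDerivAt_pushforward hDφ hsymm hψ hli.self_of_nhds hT).fderiv, divergence]
  have hinv : fderiv 𝕜 ψ (φ ξ) ∘L fderiv 𝕜 φ ξ = 1 :=
    fderiv_comp_fderiv_eq_one_of_eventually_leftInverse (hφ₂.differentiableAt two_ne_zero) hψ hli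
  have hjacobi := trace_comp_fderiv_eq_zero_of_det_eventually_const hDφ hinv hdet (T ξ)
  set A := fderiv 𝕜 φ ξ
  set B := fderiv 𝕜 ψ (φ ξ)
  set D := fderiv 𝕜 T ξ
  set A' := fderiv 𝕜 (fderiv 𝕜 φ) ξ (T ξ)
  calc LinearMap.trace 𝕜 E ((A ∘L D + A') ∘L B : E →L[𝕜] E)
      = LinearMap.trace 𝕜 E (B ∘L (A ∘L D + A') : E →L[𝕜] E) := LinearMap.trace_mul_comm 𝕜 _ _
    _ = LinearMap.trace 𝕜 E ((B ∘L A) ∘L D + B ∘L A' : E →L[𝕜] E) := by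
        rw [ContinuousLinearMap.comp_add, ContinuousLinearMap.comp_assoc]
    _ = LinearMap.trace 𝕜 E D + LinearMap.trace 𝕜 E (B ∘L A' : E →L[𝕜] E) := by
        rw [hinv]; exact map_add _ _ _
    _ = LinearMap.trace 𝕜 E D := by rw [hjacobi, add_zero]

end Divergence

section LineDeriv

variable {𝕜 E F ι : Type*} [NontriviallyNormedField 𝕜] [NormedAddCommGroup E] [NormedSpace 𝕜 E]
  [NormedAddCommGroup F] [NormedSpace 𝕜 F]

theorem lineDeriv_fun_sum {f : ι → E → F} {s : Finset ι} {x v : E}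
    (hf : ∀ k ∈ s, DifferentiableAt 𝕜 (f k) x) :
    lineDeriv 𝕜 (fun y => ∑ k ∈ s, f k y) x v = ∑ k ∈ s, lineDeriv 𝕜 (f k) x v :=
  deriv_fun_sum fun k hk => (hf k hk).lineDifferentiableAt

theorem lineDeriv_repr_apply [CompleteSpace 𝕜] [Finite ι] (b : Basis ι 𝕜 F) {V : E → F} {x : E}
    (hV : DifferentiableAt 𝕜 V x) (j : ι) (v : E) :
    lineDeriv 𝕜 (fun y => b.repr (V y) j) x v = b.repr (fderiv 𝕜 V x v) j :=
  have := b.finiteDimensional_of_finite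
  (((b.coord j).toContinuousLinearMap.hasFDerivAt.comp x hV.hasFDerivAt).hasLineDerivAt v).lineDeriv

end LineDeriv

section Coordinates

variable {𝕜 E ι : Type*} [NontriviallyNormedField 𝕜] [NormedAddCommGroup E] [NormedSpace 𝕜 E]
  [Fintype ι] (b : Basis ι 𝕜 E)

theorem divergence_eq_sum_lineDeriv [CompleteSpace 𝕜] {V : E → E} {x : E}
    (hV : DifferentiableAt 𝕜 V x) :
    divergence 𝕜 V x = ∑ j, lineDeriv 𝕜 (fun y => b.repr (V y) j) x (b j) := by
  classical
  simp only [divergence, LinearMap.trace_eq_matrix_trace 𝕜 b, Matrix.trace, Matrix.diag_apply,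
    LinearMap.toMatrix_apply, lineDeriv_repr_apply b hV, ContinuousLinearMap.coe_coe]

variable [DecidableEq ι]

/-- The Jacobian matrix of `φ` at `ξ` in the basis `b`: entry `(i, k)` is the `i`-th coordinate of
the derivative of `φ` in the direction `b k`. -/
noncomputable def jacobianMatrix (φ : E → E) (ξ : E) : Matrix ι ι 𝕜 :=
  LinearMap.toMatrix b b (fderiv 𝕜 φ ξ)

theorem repr_pushforward (φ ψ T : E → E) (x : E) :
    b.repr (pushforward 𝕜 φ ψ T x) = jacobianMatrix b φ (ψ x) *ᵥ b.repr (T (ψ x)) :=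
  (LinearMap.toMatrix_mulVec_repr b b (fderiv 𝕜 φ (ψ x)) (T (ψ x))).symm

theorem differentiableAt_jacobianMatrix_apply [CompleteSpace 𝕜] {φ : E → E} {ξ : E}
    (hφ : DifferentiableAt 𝕜 (fderiv 𝕜 φ) ξ) (i k : ι) :
    DifferentiableAt 𝕜 (fun y => jacobianMatrix b φ y i k) ξ := by
  have := b.finiteDimensional_of_finite
  simp only [jacobianMatrix, LinearMap.toMatrix_apply]
  exact (b.coord i).toContinuousLinearMap.differentiableAt.comp ξ
    (hφ.clm_apply (differentiableAt_const (b k)))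

theorem stmt1_general [CompleteSpace 𝕜] {φ ψ : E → E} {ξ : E}
    (hφ : ContDiffAt 𝕜 (minSmoothness 𝕜 2) φ ξ) (hψ : DifferentiableAt 𝕜 ψ (φ ξ))
    (hli : ∀ᶠ y in 𝓝 ξ, ψ (φ y) = y)
    (hdet : ∀ᶠ y in 𝓝 ξ, (jacobianMatrix b φ y).det = (jacobianMatrix b φ ξ).det)
    {C S : E → Matrix ι ι 𝕜} (hC : ∀ k l, DifferentiableAt 𝕜 (fun y => C y k l) ξ)
    (hS : ∀ x, S x = jacobianMatrix b φ (ψ x) * C (ψ x) * (jacobianMatrix b φ (ψ x))ᵀ) (i : ι) :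
    ∑ j, lineDeriv 𝕜 (fun x => S x i j) (φ ξ) (b j) =
      ∑ k, ∑ l, lineDeriv 𝕜 (fun y => C y k l * jacobianMatrix b φ y i k) ξ (b l) := by
  have := b.finiteDimensional_of_finite
  have hDφ := differentiableAt_fderiv_of_contDiffAt_two (hφ.of_le le_minSmoothness)
  have hCF (k l) : DifferentiableAt 𝕜 (fun y => C y k l * jacobianMatrix b φ y i k) ξ :=
    (hC k l).mul (differentiableAt_jacobianMatrix_apply b hDφ i k)
  let T (y : E) : E := b.equivFun.symm ((jacobianMatrix b φ y * C y) i)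
  have repr_T (y : E) : b.repr (T y) = (jacobianMatrix b φ y * C y) i :=
    b.equivFun.apply_symm_apply _
  have S_row (x : E) : S x i = b.repr (pushforward 𝕜 φ ψ T x) := by
    rw [hS, mul_apply_eq_vecMul, vecMul_transpose, repr_pushforward, repr_T]
  have T_component (y : E) (l : ι) :
      b.repr (T y) l = ∑ k, C y k l * jacobianMatrix b φ y i k := by
    simp only [repr_T, Matrix.mul_apply, mul_comm]
  have hT : DifferentiableAt 𝕜 T ξ := by
    refine b.equivFun.symm.toLinearMap.toContinuousLinearMap.differentiableAt.comp ξ <|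
      differentiableAt_pi.2 fun l => ?_
    simp only [← repr_T, T_component]
    exact DifferentiableAt.fun_sum fun k _ => hCF k l
  calc ∑ j, lineDeriv 𝕜 (fun x => S x i j) (φ ξ) (b j)
      = divergence 𝕜 (pushforward 𝕜 φ ψ T) (φ ξ) := by
        rw [divergence_eq_sum_lineDeriv b
          (differentiableAt_pushforward hDφ hψ hli.self_of_nhds hT)]
        simp only [S_row]
    _ = divergence 𝕜 T ξ := divergence_pushforward hφ hψ hli
        (by simpa only [jacobianMatrix, LinearMap.det_toMatrix] using hdet) hT
    _ = ∑ l, lineDeriv 𝕜 (fun y => ∑ k, C y k l * jacobianMatrix b φ y i k) ξ (b l) := by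
        simp only [divergence_eq_sum_lineDeriv b hT, T_component]
    _ = ∑ l, ∑ k, lineDeriv 𝕜 (fun y => C y k l * jacobianMatrix b φ y i k) ξ (b l) :=
        Finset.sum_congr rfl fun l _ => lineDeriv_fun_sum fun k _ => hCF k l
    _ = ∑ k, ∑ l, lineDeriv 𝕜 (fun y => C y k l * jacobianMatrix b φ y i k) ξ (b l) :=
        Finset.sum_comm

end Coordinates

section Plane

variable {𝕜 F : Type*} [NontriviallyNormedField 𝕜] [NormedAddCommGroup F] [NormedSpace 𝕜 F]

theorem deriv_fst_slice (f : 𝕜 × 𝕜 → F) (p : 𝕜 × 𝕜) :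
    deriv (fun s => f (s, p.2)) p.1 = lineDeriv 𝕜 f p (1, 0) := by
  simpa [lineDeriv, Prod.add_def] using (deriv_comp_const_add (fun s => f (s, p.2)) p.1 0).symm

theorem deriv_snd_slice (f : 𝕜 × 𝕜 → F) (p : 𝕜 × 𝕜) :
    deriv (fun s => f (p.1, s)) p.2 = lineDeriv 𝕜 f p (0, 1) := by
  simpa [lineDeriv, Prod.add_def] using (deriv_comp_const_add (fun s => f (p.1, s)) p.2 0).symm

theorem jacobian2_eq_jacobianMatrix {φ : ℝ × ℝ → ℝ × ℝ} {ξ : ℝ × ℝ}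
    (hφ : DifferentiableAt ℝ φ ξ) :
    jacobian2 φ ξ = jacobianMatrix (Basis.finTwoProd ℝ) φ ξ := by
  ext i k
  rw [jacobianMatrix, LinearMap.toMatrix_apply, ContinuousLinearMap.coe_coe,
    ← lineDeriv_repr_apply _ hφ]
  fin_cases i <;> fin_cases k <;>
    simp [jacobian2, deriv_fst_slice (fun y => (φ y).1), deriv_fst_slice (fun y => (φ y).2),
      deriv_snd_slice (fun y => (φ y).1), deriv_snd_slice (fun y => (φ y).2)]

end Plane

/-- For a volume-preserving C² diffeomorphism `φ` of the plane with C¹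
inverse `ψ` and Jacobian `F = Dφ` of determinant one, and a C¹ matrix field `C`,
the Eulerian divergence of the push-forward stress `S = F C Fᵀ` (composed with `φ⁻¹`),
evaluated along `φ`, equals the Lagrangian divergence `Σ_{k,l} ∂_{ξ_l}(C_{kl} F_{ik})`. -/
theorem stmt1 (φ ψ : ℝ × ℝ → ℝ × ℝ)
    (hφ : ContDiff ℝ 2 φ) (hψ : ContDiff ℝ 1 ψ)
    (hli : Function.LeftInverse ψ φ) (hri : Function.RightInverse ψ φ)
    (hdet : ∀ ξ, (jacobian2 φ ξ).det = 1)
    (C : ℝ × ℝ → Matrix (Fin 2) (Fin 2) ℝ)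
    (hC : ∀ i j, ContDiff ℝ 1 fun ξ => C ξ i j)
    (S : ℝ × ℝ → Matrix (Fin 2) (Fin 2) ℝ)
    (hS : ∀ x : ℝ × ℝ, S x = jacobian2 φ (ψ x) * C (ψ x) * (jacobian2 φ (ψ x))ᵀ) :
    ∀ ξ : ℝ × ℝ, ∀ i : Fin 2,
      deriv (fun s => S (s, (φ ξ).2) i 0) (φ ξ).1
          + deriv (fun s => S ((φ ξ).1, s) i 1) (φ ξ).2
        = ∑ k : Fin 2,
            (deriv (fun s => C (s, ξ.2) k 0 * jacobian2 φ (s, ξ.2) i k) ξ.1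
              + deriv (fun s => C (ξ.1, s) k 1 * jacobian2 φ (ξ.1, s) i k) ξ.2) := by
  intro ξ i
  have jacobian2_eq : jacobian2 φ = jacobianMatrix (Basis.finTwoProd ℝ) φ :=
    funext fun y => jacobian2_eq_jacobianMatrix (hφ.differentiable two_ne_zero y)
  rw [jacobian2_eq] at hdet hS ⊢
  have hdiv := stmt1_general (Basis.finTwoProd ℝ) (ξ := ξ) (by simpa using hφ.contDiffAt)
    (hψ.differentiable one_ne_zero _) (.of_forall hli) (.of_forall fun y => by rw [hdet, hdet])
    (fun k l => (hC k l).differentiable one_ne_zero ξ) hS i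
  have deriv_fst (k l) := deriv_fst_slice
    (fun y => C y k l * jacobianMatrix (Basis.finTwoProd ℝ) φ y i k) ξ
  have deriv_snd (k l) := deriv_snd_slice
    (fun y => C y k l * jacobianMatrix (Basis.finTwoProd ℝ) φ y i k) ξ
  simpa only [Fin.sum_univ_two, Basis.finTwoProd_zero, Basis.finTwoProd_one,
    deriv_fst_slice (fun x => S x i 0), deriv_snd_slice (fun x => S x i 1),
    deriv_fst, deriv_snd] using hdiv
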